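/- The space of homogeneous polynomials f ∈ R of total degree 2 satisfying D_i f = 0 for all i = 1,…,7 is exactly the two-dimensional ℂ-span of x₁² and ζ₁. -/

import Mathlib

noncomputable section

open MvPolynomial
open scoped Fin.NatCast

abbrev Rp : Type := MvPolynomial (Fin 56) ℂ

/-- `xv i` is the variable `x_i` (1-based index). -/
def xv (i : ℕ) : Rp := X ((i - 1 : ℕ) : Fin 56)

/-- The derivation `x_a ∂_b` (1-based indices). -/
def xd (a b : ℕ) (f : Rp) : Rp := xv a * pderiv ((b - 1 : ℕ) : Fin 56) f

def D1 (f : Rp) : Rp := -xd 6 8 f - xd 9 11 f - xd 10 13 f - xd 12 16 f - xd 14 19 f - xd 17 22 f + xd 35 40 f + xd 38 43 f + xd 41 45 f + xd 44 47 f + xd 46 48 f + xd 49 51 f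

def D2 (f : Rp) : Rp := xd 5 7 f + xd 6 9 f + xd 8 11 f - xd 20 23 f - xd 24 26 f - xd 27 29 f - xd 28 30 f - xd 31 33 f - xd 34 37 f + xd 46 49 f + xd 48 51 f + xd 50 52 f

def D3 (f : Rp) : Rp := -xd 5 6 f - xd 7 9 f - xd 13 15 f - xd 16 18 f - xd 19 21 f - xd 22 25 f + xd 32 35 f + xd 36 38 f + xd 39 41 f + xd 42 44 f + xd 48 50 f + xd 51 52 f

def D4 (f : Rp) : Rp := xd 4 5 f - xd 9 10 f - xd 11 13 f - xd 18 20 f - xd 21 24 f - xd 25 28 f - xd 29 32 f - xd 33 36 f - xd 37 39 f - xd 44 46 f - xd 47 48 f + xd 52 53 f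

def D5 (f : Rp) : Rp := xd 3 4 f - xd 10 12 f - xd 13 16 f - xd 15 18 f - xd 24 27 f - xd 26 29 f - xd 28 31 f - xd 30 33 f - xd 39 42 f - xd 41 44 f - xd 45 47 f + xd 53 54 f

def D6 (f : Rp) : Rp := xd 2 3 f - xd 12 14 f - xd 16 19 f - xd 18 21 f - xd 20 24 f - xd 23 26 f - xd 31 34 f - xd 33 37 f - xd 36 39 f - xd 38 41 f - xd 43 45 f + xd 54 55 f

def D7 (f : Rp) : Rp := xd 1 2 f - xd 14 17 f - xd 19 22 f - xd 21 25 f - xd 24 28 f - xd 26 30 f - xd 27 31 f - xd 29 33 f - xd 32 36 f - xd 35 38 f - xd 40 43 f + xd 55 56 f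

def Dop : ℕ → Rp → Rp
  | 1, f => D1 f
  | 2, f => D2 f
  | 3, f => D3 f
  | 4, f => D4 f
  | 5, f => D5 f
  | 6, f => D6 f
  | 7, f => D7 f
  | _, _ => 0

/-- The algebra automorphism `S` with `S(x_r) = x_{57-r}`. -/
def Sm : Rp → Rp := fun f => rename (fun j : Fin 56 => 55 - j) f

/-- `D̃ᵢ = S ∘ Dᵢ ∘ S`. -/
def Dtop (i : ℕ) (f : Rp) : Rp := Sm (Dop i (Sm f))

def aRows : List (List ℤ) :=
  [[0,0,0,0,0,0,1],
   [0,0,0,0,0,1,-1],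
   [0,0,0,0,1,-1,0],
   [0,0,0,1,-1,0,0],
   [0,1,1,-1,0,0,0],
   [1,1,-1,0,0,0,0],
   [0,-1,1,0,0,0,0],
   [-1,1,0,0,0,0,0],
   [1,-1,-1,1,0,0,0],
   [1,0,0,-1,1,0,0],
   [-1,-1,0,1,0,0,0],
   [1,0,0,0,-1,1,0],
   [-1,0,1,-1,1,0,0],
   [1,0,0,0,0,-1,1],
   [0,0,-1,0,1,0,0],
   [-1,0,1,0,-1,1,0],
   [1,0,0,0,0,0,-1],
   [0,0,-1,1,-1,1,0],
   [-1,0,1,0,0,-1,1],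
   [0,1,0,-1,0,1,0],
   [0,0,-1,1,0,-1,1],
   [-1,0,1,0,0,0,-1],
   [0,-1,0,0,0,1,0],
   [0,1,0,-1,1,-1,1],
   [0,0,-1,1,0,0,-1],
   [0,-1,0,0,1,-1,1],
   [0,1,0,0,-1,0,1],
   [0,1,0,-1,1,0,-1]]

def aTab (i r : ℕ) : ℤ := (aRows.getD (i - 1) []).getD (r - 1) 0

/-- The coroot actions `H_r`. -/
def Hop (r : ℕ) (f : Rp) : Rp :=
  ∑ i ∈ Finset.Icc 1 28, (aTab i r : ℂ) • (xd i i f - xd (57 - i) (57 - i) f)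

def zz1 : Rp := xv 1 * xv 17 + xv 2 * xv 14 + xv 3 * xv 12 + xv 4 * xv 10 + xv 5 * xv 9 - xv 6 * xv 7

def zz2 : Rp := Dtop 1 zz1

def zz3 : Rp := Dtop 3 zz2

def zz4 : Rp := Dtop 4 zz2

def zz5 : Rp := Dtop 2 zz4

def zz6 : Rp := Dtop 5 zz4

def zz7 : Rp := Dtop 2 zz6

def zz8 : Rp := Dtop 6 zz6

def zz9 : Rp := Dtop 7 zz8

def zz10 : Rp := Dtop 4 zz7

def zz11 : Rp := Dtop 2 zz8

def zz12 : Rp := Dtop 3 zz10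

def zz13 : Rp := Dtop 2 zz9

def zz14 : Rp := Dtop 4 zz11

def zz15 : Rp := Dtop 4 zz13

def zz16 : Rp := Dtop 3 zz14

def zz17 : Rp := Dtop 5 zz14

def zz18 : Rp := Dtop 3 zz15

def zz19 : Rp := Dtop 1 zz12

def zz20 : Rp := Dtop 7 zz17

def zz21 : Rp := Dtop 3 zz17

def zz22 : Rp := Dtop 6 zz20

def zz23 : Rp := Dtop 1 zz16

def zz24 : Rp := Dtop 5 zz18

def zz25 : Rp := Dtop 4 zz21

def zz26 : Rp := Dtop 1 zz18

def zz27 : Rp := Dtop 3 zz22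

def zz28 : Rp := Dtop 1 zz21

def zz29 : Rp := Dtop 4 zz24

def zz30 : Rp := Dtop 1 zz25

def zz31 : Rp := Dtop 5 zz26

def zz32 : Rp := Dtop 4 zz27

def zz33 : Rp := Dtop 2 zz25

def zz34 : Rp := Dtop 1 zz29

def zz35 : Rp := Dtop 1 zz27

def zz36 : Rp := Dtop 5 zz32

def zz37 : Rp := Dtop 3 zz30

def zz38 : Rp := Dtop 2 zz29

def zz39 : Rp := Dtop 1 zz32

def zz40 : Rp := Dtop 1 zz33

def zz41 : Rp := Dtop 1 zz34

def zz42 : Rp := Dtop 2 zz32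

def zz43 : Rp := Dtop 1 zz36

def zz44 : Rp := Dtop 2 zz37

def zz45 : Rp := Dtop 1 zz38

def zz46 : Rp := Dtop 3 zz39

def zz47 : Rp := Dtop 2 zz36

def zz48 : Rp := Dtop 4 zz44

def zz49 : Rp := Dtop 2 zz41

def zz50 : Rp := Dtop 1 zz42

def zz51 : Rp := Dtop 3 zz43

def zz52 : Rp := Dtop 4 zz47

def zz53 : Rp := Dtop 5 zz48

def zz54 : Rp := Dtop 4 zz49

def zz55 : Rp := Dtop 3 zz50

def zz56 : Rp := Dtop 1 zz47

def zz57 : Rp := Dtop 4 zz51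

def zz58 : Rp := Dtop 3 zz52

def zz59 : Rp := Dtop 6 zz53

def zz60 : Rp := Dtop 5 zz54

def zz61 : Rp := Dtop 4 zz55

def zz62 : Rp := Dtop 3 zz56

def zz63 : Rp := Dtop 1 zz52

def zz64 : Rp := Dtop 7 zz59

def zz65 : Rp := Dtop 6 zz60

def zz66 : Rp := Dtop 5 zz61

def zz67 : Rp := Dtop 4 zz62

def zz68 : Rp := Dtop 2 zz57

def zz69 : Rp := Dtop 3 zz63

def zz70 : Rp := Dtop 1 zz58

def zetaList : List Rp := [zz1, zz2, zz3, zz4, zz5, zz6, zz7, zz8, zz9, zz10, zz11, zz12, zz13, zz14, zz15, zz16, zz17, zz18, zz19, zz20, zz21, zz22, zz23, zz24, zz25, zz26, zz27, zz28, zz29, zz30, zz31, zz32, zz33, zz34, zz35, zz36, zz37, zz38, zz39, zz40, zz41, zz42, zz43, zz44, zz45, zz46, zz47, zz48, zz49, zz50, zz51, zz52, zz53, zz54, zz55, zz56, zz57, zz58, zz59, zz60, zz61, zz62, zz63, zz64, zz65, zz66, zz67, zz68, zz69, zz70]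

/-- `zeta j` is `ζ_j` for `1 ≤ j ≤ 133` (1-based). -/
def zeta (j : ℕ) : Rp :=
  if j ≤ 70 then zetaList.getD (j - 1) 0 else Sm (zetaList.getD (133 - j) 0)

/-- The quartic singular vector `ς` of weight `λ₆`. -/
def sigmaP : Rp := zeta 1 * zeta 19 - zeta 2 * zeta 12 + zeta 3 * zeta 10 - zeta 4 * zeta 7 + zeta 5 * zeta 6

/-- The cubic singular vector `ϑ` of weight `λ₇`. -/
def thetaP : Rp :=
  ((1 : ℂ)/2) • (xv 1 * zeta 64) - xv 2 * zeta 59 + xv 3 * zeta 53 - xv 4 * zeta 48 + xv 5 * zeta 44 - xv 6 * zeta 40 - xv 7 * zeta 37 + xv 8 * zeta 33 + xv 9 * zeta 30 + xv 10 * zeta 28 - xv 11 * zeta 25 + xv 12 * zeta 23 - xv 13 * zeta 21 + xv 14 * zeta 19 + xv 15 * zeta 17 - xv 16 * zeta 16 + xv 18 * zeta 14 - xv 19 * zeta 12 + xv 20 * zeta 11 + xv 21 * zeta 10 + xv 23 * zeta 8 + xv 24 * zeta 7 + xv 26 * zeta 6 + xv 27 * zeta 5 + xv 29 * zeta 4 +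 xv 32 * zeta 3 + xv 35 * zeta 2 + xv 40 * zeta 1

def IsetE7 : Finset ℕ := {1,2,3,5,6,9,10,11,12,15,17,18,19,21,22,26,27,28,29,33,34,35,36,40,41,42,43,44,50,51,52,53,54,55,58,63}

/-- Cartan's quartic `E₇`-invariant `η`. -/
def etaP : Rp :=
  4 * ((∑ i ∈ IsetE7, zeta i * zeta (134 - i)) -
        ∑ r ∈ Finset.Icc 1 63 \ IsetE7, zeta r * zeta (134 - r))
  + 4 * zeta 70 * (zeta 70 - 2 * zeta 68 - 3 * zeta 69 + 4 * zeta 67 - 3 * zeta 66 + 2 * zeta 65 - zeta 64)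
  + zeta 68 * (7 * zeta 68 + 16 * zeta 69 - 24 * zeta 67 + 18 * zeta 66 - 12 * zeta 65 + 6 * zeta 64)
  + 4 * zeta 69 * (3 * zeta 69 - 8 * zeta 67 + 6 * zeta 66 - 4 * zeta 65 + 2 * zeta 64)
  + 4 * zeta 67 * (6 * zeta 67 - 9 * zeta 66 + 6 * zeta 65 - 3 * zeta 64)
  + zeta 66 * (15 * zeta 66 - 20 * zeta 65 + 10 * zeta 64)
  + 8 * zeta 65 * (zeta 65 - zeta 64)
  + 3 * zeta 64 ^ 2

/-- The iterated partial derivative `∂^m = ∂₁^{m₁} ∘ ⋯ ∘ ∂₅₆^{m₅₆}`. -/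
def pdMulti (m : Fin 56 →₀ ℕ) (f : Rp) : Rp :=
  (List.finRange 56).foldr (fun i g => (fun h => pderiv i h)^[m i] g) f

/-- The constant-coefficient differential operator `𝒟` obtained from `η` by
replacing each variable by the corresponding partial derivative. -/
def Dcal (f : Rp) : Rp := ∑ m ∈ etaP.support, MvPolynomial.coeff m etaP • pdMulti m f

/-- The specialization `φ` killing `x₃, …, x₅₄`. -/
def phiP : Rp →ₐ[ℂ] Rp :=
  aeval (fun j : Fin 56 => if (j : ℕ) ≤ 1 ∨ 54 ≤ (j : ℕ) then X j else 0)

def edgesE7 : List (ℕ × ℕ) := [(1,3),(3,4),(2,4),(4,5),(5,6),(6,7)]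

/-- The Cartan matrix of `E₇` (Bourbaki-style labeling, node 2 attached to node 4). -/
def cartanE7 (i j : ℕ) : ℤ :=
  if i = j then 2 else if (i, j) ∈ edgesE7 ∨ (j, i) ∈ edgesE7 then -1 else 0

def epsE7 (i : ℕ) : ℤ := if i = 1 ∨ i = 3 then -1 else 1

/-- The edges `(sign, a, b)` of the `i`-th derivation (1-based variables). -/
def edgeL : ℕ → List (ℤ × ℕ × ℕ)
  | 1 => [(-1, 6, 8), (-1, 9, 11), (-1, 10, 13), (-1, 12, 16), (-1, 14, 19), (-1, 17, 22), (1, 35, 40), (1, 38, 43), (1, 41, 45), (1, 44, 47), (1, 46, 48), (1, 49, 51)]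
  | 2 => [(1, 5, 7), (1, 6, 9), (1, 8, 11), (-1, 20, 23), (-1, 24, 26), (-1, 27, 29), (-1, 28, 30), (-1, 31, 33), (-1, 34, 37), (1, 46, 49), (1, 48, 51), (1, 50, 52)]
  | 3 => [(-1, 5, 6), (-1, 7, 9), (-1, 13, 15), (-1, 16, 18), (-1, 19, 21), (-1, 22, 25), (1, 32, 35), (1, 36, 38), (1, 39, 41), (1, 42, 44), (1, 48, 50), (1, 51, 52)]
  | 4 => [(1, 4, 5), (-1, 9, 10), (-1, 11, 13), (-1, 18, 20), (-1, 21, 24), (-1, 25, 28), (-1, 29, 32), (-1, 33, 36), (-1, 37, 39), (-1, 44, 46), (-1, 47, 48), (1, 52, 53)]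
  | 5 => [(1, 3, 4), (-1, 10, 12), (-1, 13, 16), (-1, 15, 18), (-1, 24, 27), (-1, 26, 29), (-1, 28, 31), (-1, 30, 33), (-1, 39, 42), (-1, 41, 44), (-1, 45, 47), (1, 53, 54)]
  | 6 => [(1, 2, 3), (-1, 12, 14), (-1, 16, 19), (-1, 18, 21), (-1, 20, 24), (-1, 23, 26), (-1, 31, 34), (-1, 33, 37), (-1, 36, 39), (-1, 38, 41), (-1, 43, 45), (1, 54, 55)]
  | 7 => [(1, 1, 2), (-1, 14, 17), (-1, 19, 22), (-1, 21, 25), (-1, 24, 28), (-1, 26, 30), (-1, 27, 31), (-1, 29, 33), (-1, 32, 36), (-1, 35, 38), (-1, 40, 43), (1, 55, 56)]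
  | _ => []

/-- The image of the `p`-th basis vector (0-based) under the transposed operator. -/
def tip (i : ℕ) (p : Fin 56) : List (ℤ × Fin 56) :=
  ((edgeL i).filter (fun e => ((e.2.1 - 1 : ℕ) : Fin 56) = p)).map
    (fun e => (e.1, ((e.2.2 - 1 : ℕ) : Fin 56)))

def tsum7 (i : ℕ) (p : Fin 56) (h : Fin 56 → ℂ) : ℂ :=
  ((tip i p).map (fun e => (e.1 : ℂ) * h e.2)).sum

def q7 (f : Rp) (p r : Fin 56) : ℂ := coeff 0 (pderiv p (pderiv r f))

lemma q7_symm (f : Rp) (p r : Fin 56) : q7 f p r = q7 f r p := by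
  unfold q7
  simp only [coeff_pderiv]
  by_cases h : p = r
  · subst h; rfl
  · have h' : r ≠ p := fun e => h e.symm
    simp [h, h', add_comm]

lemma q7_add (f g : Rp) (p r : Fin 56) : q7 (f + g) p r = q7 f p r + q7 g p r := by
  simp [q7]

lemma q7_smul (c : ℂ) (f : Rp) (p r : Fin 56) : q7 (c • f) p r = c * q7 f p r := by
  simp [q7]

lemma q7_xd (a b : ℕ) (f : Rp) (p r : Fin 56) :
    q7 (xd a b f) p r =
      (if ((a - 1 : ℕ) : Fin 56) = p then q7 f ((b - 1 : ℕ) : Fin 56) r else 0) +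
      (if ((a - 1 : ℕ) : Fin 56) = r then q7 f p ((b - 1 : ℕ) : Fin 56) else 0) := by
  rw [q7_symm f _ r]
  unfold q7 xd xv
  generalize ((a - 1 : ℕ) : Fin 56) = u
  generalize ((b - 1 : ℕ) : Fin 56) = v
  have hX : ∀ g : Rp, coeff 0 (X u * g) = 0 := fun g => by simp [coeff_X_mul']
  simp only [Derivation.leibniz, pderiv_X, Pi.single_apply, smul_eq_mul, map_add, coeff_add]
  by_cases h1 : u = p <;> by_cases h2 : u = r <;>
    simp [h1, h2, hX, eq_comm] <;> simp_all [eq_comm] <;> exact hX _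

def Dlist (i : ℕ) (f : Rp) : Rp :=
  ((edgeL i).map (fun e => (e.1 : ℂ) • xd e.2.1 e.2.2 f)).sum

lemma Dop_eq (i : ℕ) (hi : i ∈ Finset.Icc 1 7) (f : Rp) : Dop i f = Dlist i f := by
  rw [Finset.mem_Icc] at hi
  obtain ⟨h1, h2⟩ := hi
  interval_cases i <;>
    simp [Dop, Dlist, edgeL, D1, D2, D3, D4, D5, D6, D7] <;> abel

lemma rel_aux (l : List (ℤ × ℕ × ℕ)) (f : Rp) (p r : Fin 56) :
    q7 ((l.map (fun e => (e.1 : ℂ) • xd e.2.1 e.2.2 f)).sum) p r =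
      (((l.filter (fun e => ((e.2.1 - 1 : ℕ) : Fin 56) = p)).map
        (fun e => (e.1, ((e.2.2 - 1 : ℕ) : Fin 56)))).map
          (fun e => (e.1 : ℂ) * q7 f e.2 r)).sum +
      (((l.filter (fun e => ((e.2.1 - 1 : ℕ) : Fin 56) = r)).map
        (fun e => (e.1, ((e.2.2 - 1 : ℕ) : Fin 56)))).map
          (fun e => (e.1 : ℂ) * q7 f p e.2)).sum := by
  induction l with
  | nil => simp [q7]
  | cons e l ih =>
    rw [List.map_cons, List.sum_cons, q7_add, ih, q7_smul, q7_xd]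
    simp only [List.filter_cons, decide_eq_true_eq]
    split_ifs <;> (try simp only [List.map_cons, List.sum_cons]) <;> ring

lemma rel (f : Rp) (i : ℕ) (hi : i ∈ Finset.Icc 1 7) (hf : Dop i f = 0) (p r : Fin 56) :
    tsum7 i p (fun b => q7 f b r) + tsum7 i r (fun b => q7 f p b) = 0 := by
  have h := rel_aux (edgeL i) f p r
  rw [Dop_eq i hi] at hf
  unfold Dlist at hf
  rw [hf] at h
  simp only [tsum7, tip]
  rw [← h]
  simp [q7]

lemma tsum7_zero (i : ℕ) (p : Fin 56) (h : Fin 56 → ℂ) (h0 : ∀ b, h b = 0) :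
    tsum7 i p h = 0 := by
  simp [tsum7, h0]

lemma tsum7_one (i : ℕ) (p : Fin 56) (h : Fin 56 → ℂ) (s : ℤ) (b : Fin 56)
    (ht : tip i p = [(s, b)]) : tsum7 i p h = s * h b := by
  simp [tsum7, ht]

lemma tsum7_nil (i : ℕ) (p : Fin 56) (h : Fin 56 → ℂ)
    (ht : tip i p = []) : tsum7 i p h = 0 := by
  simp [tsum7, ht]

/-- Entry `b`: a pair `(i, a)` such that the `i`-th operator maps `a` to `± b`. -/
def parTab : List (ℕ × Fin 56) :=
  [(1, 0), (7, 0), (6, 1), (5, 2), (4, 3), (3, 4), (2, 4), (1, 5), (2, 5), (4, 8), (1, 8), (5, 9), (1, 9), (6, 11), (3, 12), (1, 11), (7, 13), (3, 15), (1, 13), (4, 17), (3, 18), (1, 16), (2, 19), (4, 20), (3, 21), (2, 23), (5, 23), (4, 24), (2, 26), (2, 27), (5, 27), (4, 28), (2, 30), (6, 30), (3, 31), (4, 32), (2, 33), (3, 35), (4, 36), (1, 34), (3, 38), (5, 38), (1, 37), (3, 41), (1, 40), (4, 43), (1, 43), (1, 45), (2, 45), (3, 47), (1, 48), (2, 49),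 (4, 51), (5, 52), (6, 53), (7, 54)]

/-- The same, avoiding the seventh operator where possible. -/
def parTab0 : List (ℕ × Fin 56) :=
  [(1, 0), (1, 0), (6, 1), (5, 2), (4, 3), (3, 4), (2, 4), (1, 5), (2, 5), (4, 8), (1, 8), (5, 9), (1, 9), (6, 11), (3, 12), (1, 11), (1, 0), (3, 15), (1, 13), (4, 17), (3, 18), (1, 16), (2, 19), (4, 20), (3, 21), (2, 23), (5, 23), (4, 24), (2, 26), (2, 27), (5, 27), (4, 28), (2, 30), (6, 30), (3, 31), (4, 32), (2, 33), (3, 35), (4, 36), (1, 34), (3, 38), (5, 38), (1, 37), (3, 41), (1, 40), (4, 43), (1, 43), (1, 45), (2, 45), (3, 47), (1, 48), (2, 49), (4, 51), (5, 52), (6, 53), (1, 0)]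

lemma parent_aux : ∀ b : Fin 56, b ≠ 0 → (parTab.getD b.val (1, 0)).2 < b ∧
    (parTab.getD b.val (1, 0)).1 ∈ Finset.Icc 1 7 ∧
    (tip (parTab.getD b.val (1, 0)).1 (parTab.getD b.val (1, 0)).2 = [(1, b)] ∨
      tip (parTab.getD b.val (1, 0)).1 (parTab.getD b.val (1, 0)).2 = [(-1, b)]) := by
  decide +kernel

lemma parent0_aux : ∀ b : Fin 56, b ≠ 0 → b ≠ 1 → b ≠ 16 → b ≠ 55 →
    (parTab0.getD b.val (1, 0)).1 ∈ Finset.Icc 1 7 ∧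
    tip (parTab0.getD b.val (1, 0)).1 0 = [] ∧
    (tip (parTab0.getD b.val (1, 0)).1 (parTab0.getD b.val (1, 0)).2 = [(1, b)] ∨
      tip (parTab0.getD b.val (1, 0)).1 (parTab0.getD b.val (1, 0)).2 = [(-1, b)]) := by
  decide +kernel

/-- Every basis vector other than the first is reached from an earlier one. -/
lemma parent (b : Fin 56) (hb : b ≠ 0) : ∃ a : Fin 56, a < b ∧ ∃ i ∈ Finset.Icc 1 7,
    tip i a = [(1, b)] ∨ tip i a = [(-1, b)] := by
  obtain ⟨h1, h2, h3⟩ := parent_aux b hb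
  exact ⟨_, h1, _, h2, h3⟩

lemma parent0 (b : Fin 56) (h0 : b ≠ 0) (h1 : b ≠ 1) (h16 : b ≠ 16) (h55 : b ≠ 55) :
    ∃ a : Fin 56, ∃ i ∈ Finset.Icc 1 7,
      tip i 0 = [] ∧ (tip i a = [(1, b)] ∨ tip i a = [(-1, b)]) := by
  obtain ⟨h1, h2, h3⟩ := parent0_aux b h0 h1 h16 h55
  exact ⟨_, _, h1, h2, h3⟩

lemma q7_vanish (f : Rp) (hf : ∀ i ∈ Finset.Icc 1 7, Dop i f = 0)
    (h1 : q7 f 0 0 = 0) (h17 : q7 f 0 16 = 0) : ∀ p r, q7 f p r = 0 := by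
  have step2 : ∀ (i : ℕ) (p r : Fin 56) (s t : ℤ) (b c : Fin 56), i ∈ Finset.Icc 1 7 →
      tip i p = [(s, b)] → tip i r = [(t, c)] → (s : ℂ) * q7 f b r + t * q7 f p c = 0 := by
    intro i p r s t b c hi hp hr
    have := rel f i hi (hf i hi) p r
    rwa [tsum7_one _ _ _ _ _ hp, tsum7_one _ _ _ _ _ hr] at this
  have k0 := step2 7 0 54 (1) (1) 1 55 (by decide) (by decide) (by decide)
  have k1 := step2 6 1 53 (1) (1) 2 54 (by decide) (by decide) (by decide)
  have k2 := step2 5 2 52 (1) (1) 3 53 (by decide) (by decide) (by decide)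
  have k3 := step2 4 3 51 (1) (1) 4 52 (by decide) (by decide) (by decide)
  have k4 := step2 2 4 49 (1) (1) 6 51 (by decide) (by decide) (by decide)
  have k5 := step2 3 6 47 (-1) (1) 8 49 (by decide) (by decide) (by decide)
  have k6 := step2 1 8 45 (-1) (1) 10 47 (by decide) (by decide) (by decide)
  have k7 := step2 4 10 43 (-1) (-1) 12 45 (by decide) (by decide) (by decide)
  have k8 := step2 3 12 41 (-1) (1) 14 43 (by decide) (by decide) (by decide)
  have k9 := step2 5 14 38 (-1) (-1) 17 41 (by decide) (by decide) (by decide)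
  have k10 := step2 4 17 36 (-1) (-1) 19 38 (by decide) (by decide) (by decide)
  have k11 := step2 2 19 33 (-1) (-1) 22 36 (by decide) (by decide) (by decide)
  have k12 := step2 6 22 30 (-1) (-1) 25 33 (by decide) (by decide) (by decide)
  have k13 := step2 5 25 27 (-1) (-1) 28 30 (by decide) (by decide) (by decide)
  have k14 := step2 4 28 24 (-1) (-1) 31 27 (by decide) (by decide) (by decide)
  have k15 := step2 3 31 21 (1) (-1) 34 24 (by decide) (by decide) (by decide)
  have k16 := step2 1 34 16 (1) (-1) 39 21 (by decide) (by decide) (by decide)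
  have k17 := step2 7 39 13 (-1) (-1) 42 16 (by decide) (by decide) (by decide)
  have k18 := step2 6 42 11 (-1) (-1) 44 13 (by decide) (by decide) (by decide)
  have k19 := step2 5 44 9 (-1) (-1) 46 11 (by decide) (by decide) (by decide)
  have k20 := step2 4 46 8 (-1) (-1) 47 9 (by decide) (by decide) (by decide)
  have k21 := step2 2 47 5 (1) (1) 50 8 (by decide) (by decide) (by decide)
  have k22 := step2 3 50 4 (1) (-1) 51 5 (by decide) (by decide) (by decide)
  have k23 := step2 4 51 3 (1) (1) 52 4 (by decide) (by decide) (by decide)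
  have k24 := step2 5 52 2 (1) (1) 53 3 (by decide) (by decide) (by decide)
  have k25 := step2 6 53 1 (1) (1) 54 2 (by decide) (by decide) (by decide)
  have k26 := step2 7 54 0 (1) (1) 55 1 (by decide) (by decide) (by decide)
  have kz := step2 7 0 0 1 1 1 1 (by decide) (by decide) (by decide)
  have e2 : q7 f 0 1 = 0 := by
    rw [q7_symm f 1 0] at kz
    push_cast at kz
    linear_combination kz / 2
  have e56 : q7 f 0 55 = 0 := by
    have hs := q7_symm f 55 0
    push_cast at *
    clear h1 h17 kz e2 hf step2
    grind
  have base : ∀ r, q7 f 0 r = 0 := by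
    intro r
    by_cases c0 : r = 0
    · rw [c0]; exact h1
    by_cases c1 : r = 1
    · rw [c1]; exact e2
    by_cases c2 : r = 16
    · rw [c2]; exact h17
    by_cases c3 : r = 55
    · rw [c3]; exact e56
    obtain ⟨a, i, hi, hn, ha⟩ := parent0 r c0 c1 c2 c3
    have := rel f i hi (hf i hi) 0 a
    rw [tsum7_nil _ _ _ hn] at this
    rcases ha with ha | ha
    · rw [tsum7_one _ _ _ _ _ ha] at this
      simpa using this
    · rw [tsum7_one _ _ _ _ _ ha] at this
      simpa using this
  intro p
  induction p using WellFoundedLT.induction with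
  | ind p ih =>
    intro r
    by_cases c0 : p = 0
    · rw [c0]; exact base r
    obtain ⟨a, hlt, i, hi, ha⟩ := parent p c0
    have := rel f i hi (hf i hi) a r
    rw [tsum7_zero i r _ (fun b => ih a hlt b)] at this
    rcases ha with ha | ha
    · rw [tsum7_one _ _ _ _ _ ha] at this
      simpa using this
    · rw [tsum7_one _ _ _ _ _ ha] at this
      simpa using this

lemma eq_zero_of_q7 (f : Rp) (hf : f.IsHomogeneous 2) (h : ∀ p r, q7 f p r = 0) : f = 0 := by
  ext d
  rw [coeff_zero]
  by_contra hd
  have hdeg : d.degree = 2 := by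
    have := hf hd
    rw [Finsupp.degree_eq_weight_one]; exact this
  have hne : d ≠ 0 := by rintro rfl; simp at hdeg
  obtain ⟨u, hu⟩ := Finsupp.ne_iff.mp hne
  have hle : Finsupp.single u 1 ≤ d := by
    rw [Finsupp.single_le_iff]; exact Nat.one_le_iff_ne_zero.mpr hu
  obtain ⟨d', rfl⟩ := exists_add_of_le hle
  have hdeg' : d'.degree = 1 := by
    rw [map_add, Finsupp.degree_single] at hdeg; omega
  have hne' : d' ≠ 0 := by rintro rfl; simp at hdeg'
  obtain ⟨v, hv⟩ := Finsupp.ne_iff.mp hne'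
  have hle' : Finsupp.single v 1 ≤ d' := by
    rw [Finsupp.single_le_iff]; exact Nat.one_le_iff_ne_zero.mpr hv
  obtain ⟨d'', rfl⟩ := exists_add_of_le hle'
  have hdeg'' : d''.degree = 0 := by
    rw [map_add, Finsupp.degree_single] at hdeg'; omega
  rw [Finsupp.degree_eq_zero_iff] at hdeg''
  subst hdeg''
  apply hd
  have := h u v
  unfold q7 at this
  rw [coeff_pderiv, coeff_pderiv, mul_eq_zero, mul_eq_zero] at this
  rcases this with (h' | h') | h'
  · simpa using h'
  · exact absurd h' (Nat.cast_add_one_ne_zero _)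
  · exact absurd h' (Nat.cast_add_one_ne_zero _)

lemma xd_add (a b : ℕ) (f g : Rp) : xd a b (f + g) = xd a b f + xd a b g := by
  simp [xd, mul_add]

lemma xd_sub (a b : ℕ) (f g : Rp) : xd a b (f - g) = xd a b f - xd a b g := by
  simp [xd, mul_sub]

lemma xd_smul (a b : ℕ) (c : ℂ) (f : Rp) : xd a b (c • f) = c • xd a b f := by
  simp [xd]

lemma xd_mul (a b : ℕ) (f g : Rp) : xd a b (f * g) = f * xd a b g + g * xd a b f := by
  simp [xd, Derivation.leibniz]; ring

lemma xd_xv (a b c : ℕ) : xd a b (xv c) =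
    if ((b - 1 : ℕ) : Fin 56) = ((c - 1 : ℕ) : Fin 56) then xv a else 0 := by
  unfold xd
  rw [xv.eq_def c, pderiv_X, Pi.single_apply]
  simp [eq_comm]

lemma Dlist_add (i : ℕ) (f g : Rp) : Dlist i (f + g) = Dlist i f + Dlist i g := by
  simp [Dlist, xd_add, smul_add, List.sum_map_add]

lemma Dlist_smul (i : ℕ) (c : ℂ) (f : Rp) : Dlist i (c • f) = c • Dlist i f := by
  simp [Dlist, xd_smul, List.smul_sum, Function.comp_def, smul_comm c]

lemma D_sq (i : ℕ) (hi : i ∈ Finset.Icc 1 7) : Dop i (xv 1 ^ 2) = 0 := by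
  rw [Finset.mem_Icc] at hi
  obtain ⟨h1, h2⟩ := hi
  interval_cases i <;>
    simp only [Dop, D1, D2, D3, D4, D5, D6, D7, sq, xd_mul, xd_xv] <;> simp

lemma D_zz1 (i : ℕ) (hi : i ∈ Finset.Icc 1 7) : Dop i zz1 = 0 := by
  rw [Finset.mem_Icc] at hi
  obtain ⟨h1, h2⟩ := hi
  interval_cases i <;>
    simp only [Dop, D1, D2, D3, D4, D5, D6, D7, zz1, xd_add, xd_sub, xd_mul, xd_xv] <;>
    simp +decide <;> ring

lemma hom_xv (i : ℕ) : (xv i).IsHomogeneous 1 := isHomogeneous_X _ _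

lemma hom_sq : (xv 1 ^ 2).IsHomogeneous 2 := by
  simpa using (hom_xv 1).pow 2

lemma hom_zz1 : zz1.IsHomogeneous 2 := by
  unfold zz1
  have h : ∀ i j, (xv i * xv j).IsHomogeneous 2 := fun i j => (hom_xv i).mul (hom_xv j)
  exact (((((h _ _).add (h _ _)).add (h _ _)).add (h _ _)).add (h _ _)).sub (h _ _)

lemma q7_xx (a b : ℕ) (p r : Fin 56) : q7 (xv a * xv b) p r =
    (if ((a - 1 : ℕ) : Fin 56) = p then 1 else 0) * (if ((b - 1 : ℕ) : Fin 56) = r then 1 else 0)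
    + (if ((a - 1 : ℕ) : Fin 56) = r then 1 else 0) *
      (if ((b - 1 : ℕ) : Fin 56) = p then 1 else 0) := by
  unfold q7 xv
  generalize ((a - 1 : ℕ) : Fin 56) = u
  generalize ((b - 1 : ℕ) : Fin 56) = v
  simp only [Derivation.leibniz, pderiv_X, Pi.single_apply, smul_eq_mul, map_add, coeff_add]
  by_cases h1 : u = p <;> by_cases h2 : u = r <;> by_cases h3 : v = p <;> by_cases h4 : v = r <;>
    simp [h1, h2, h3, h4, eq_comm] <;> simp_all [eq_comm]

lemma q7_sub (f g : Rp) (p r : Fin 56) : q7 (f - g) p r = q7 f p r - q7 g p r := by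
  simp [q7]

lemma v1 : q7 (xv 1 ^ 2) 0 0 = 2 := by
  rw [sq, q7_xx]; simp; norm_num
lemma v2 : q7 (xv 1 ^ 2) 0 16 = 0 := by
  rw [sq, q7_xx]; simp +decide
lemma v3 : q7 zz1 0 0 = 0 := by
  simp only [zz1, q7_add, q7_sub, q7_xx]; simp +decide
lemma v4 : q7 zz1 0 16 = 1 := by
  simp only [zz1, q7_add, q7_sub, q7_xx]; simp +decide

theorem degree_two_singular_vectors :
    (∀ f : Rp, (f.IsHomogeneous 2 ∧ ∀ i ∈ Finset.Icc 1 7, Dop i f = 0) ↔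
        f ∈ Submodule.span ℂ ({xv 1 ^ 2, zz1} : Set Rp)) ∧
    LinearIndependent ℂ ![xv 1 ^ 2, zz1] := by
  constructor
  · intro f
    rw [Submodule.mem_span_pair]
    constructor
    · rintro ⟨hh, hD⟩
      refine ⟨q7 f 0 0 / 2, q7 f 0 16, ?_⟩
      have hz : f + ((-(q7 f 0 0 / 2)) • xv 1 ^ 2 + (-(q7 f 0 16)) • zz1) = 0 := by
        apply eq_zero_of_q7
        · refine hh.add ((Submodule.smul_mem (homogeneousSubmodule (Fin 56) ℂ 2) _ hom_sq).add
            (Submodule.smul_mem (homogeneousSubmodule (Fin 56) ℂ 2) _ hom_zz1))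
        · apply q7_vanish
          · intro i hi
            have a1 := hD i hi
            have a2 := D_sq i hi
            have a3 := D_zz1 i hi
            rw [Dop_eq i hi] at *
            rw [Dlist_add, Dlist_add, Dlist_smul, Dlist_smul, a1, a2, a3]
            simp
          · rw [q7_add, q7_add, q7_smul, q7_smul, v1, v3]; ring
          · rw [q7_add, q7_add, q7_smul, q7_smul, v2, v4]; ring
      rw [neg_smul, neg_smul] at hz
      linear_combination -hz
    · rintro ⟨a, b, rfl⟩
      refine ⟨(Submodule.smul_mem (homogeneousSubmodule (Fin 56) ℂ 2) a hom_sq).add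
            (Submodule.smul_mem (homogeneousSubmodule (Fin 56) ℂ 2) b hom_zz1), ?_⟩
      intro i hi
      have a2 := D_sq i hi
      have a3 := D_zz1 i hi
      rw [Dop_eq i hi] at *
      rw [Dlist_add, Dlist_smul, Dlist_smul, a2, a3]
      simp
  · rw [LinearIndependent.pair_iff]
    intro s t h
    have h1 : q7 (s • xv 1 ^ 2 + t • zz1) 0 0 = 0 := by rw [h]; simp [q7]
    have h2 : q7 (s • xv 1 ^ 2 + t • zz1) 0 16 = 0 := by rw [h]; simp [q7]
    rw [q7_add, q7_smul, q7_smul, v1, v3] at h1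
    rw [q7_add, q7_smul, q7_smul, v2, v4] at h2
    constructor
    · linear_combination h1 / 2
    · linear_combination h2
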